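/- Let C be a type, δ a natural number, and f : Finset C → ℝ ∪ {−∞, +∞} a monotone objective (A ⊆ B implies f(A) ≤ f(B)) such that every finite subset A ⊆ C contains a subset B ⊆ A with f(B) = f(A) and |B| ≤ δ. Then for every finite S ⊆ C, the set {h ∈ S : f(S \ {h}) < f(S)} has at most δ elements. -/

import Mathlib

/-- Combinatorial core of the backward analysis of randomized incremental
algorithms for LP-type problems: if `f : Finset C → EReal` is monotone and
every finite subset `A` contains a subset `B ⊆ A` with `f B = f A` and
`|B| ≤ δ`, then for every finite `S ⊆ C` the set of constraints `h ∈ S`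
whose removal strictly decreases the objective has at most `δ` elements. -/
theorem stmt_11 (C : Type*) [DecidableEq C] (δ : ℕ) (f : Finset C → EReal)
    (hmono : ∀ A B : Finset C, A ⊆ B → f A ≤ f B)
    (hbasis : ∀ A : Finset C, ∃ B ⊆ A, f B = f A ∧ B.card ≤ δ) :
    ∀ S : Finset C, {h : C | h ∈ S ∧ f (S.erase h) < f S}.ncard ≤ δ := by
  intro S
  obtain ⟨B, hBS, hfB, hcard⟩ := hbasis S
  have hsub : {h : C | h ∈ S ∧ f (S.erase h) < f S} ⊆ (B : Set C) := by
    rintro h ⟨_, hlt⟩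
    by_contra hB
    have hB2 : h ∉ B := fun hh => hB (Finset.mem_coe.mpr hh)
    have hle := hmono B (S.erase h) (Finset.subset_erase.mpr ⟨hBS, hB2⟩)
    rw [hfB] at hle
    exact absurd hlt (not_lt.mpr hle)
  calc _ ≤ (B : Set C).ncard := Set.ncard_le_ncard hsub B.finite_toSet
    _ = B.card := Set.ncard_coe_finset B
    _ ≤ δ := hcard
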